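/- arXiv:math/0302222 — 2 statements merged into one kernel-verified Lean document; each statement's English description precedes it below -/
import Mathlib

section
/- Let (M,Δ) be a discrete quantum group with left invariant weight φ and modular automorphism group σ^φ, and let m_ℝ be an invariant mean on L^∞(ℝ). For ω ∈ M_*, define ω' on M by ω'(x) = m_ℝ(t ↦ ω(σ_t^φ(x))). Then ω' is a normal functional on M, ‖ω'‖ ≤ ‖ω‖, and ω' is σ^φ-invariant: ω'∘σ_t^φ = ω' for all t ∈ ℝ. -/
/-!
An interface for (von Neumann algebraic) locally compact quantum groups and
discrete quantum groups, following Kustermans–Vaes, encoded via the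
multiplicative unitary `W` acting on (a model `HH` of) `H ⊗ H`.
-/

open scoped ComplexInnerProductSpace ComplexOrder ENNReal
open Filter Topology

noncomputable section

section Functionals

variable {H : Type} [NormedAddCommGroup H] [InnerProductSpace ℂ H] [CompleteSpace H]

/-- The vector functional `ω_{ξ,η}(x) = ⟪η, x ξ⟫` on `B(H)`. -/
def vecFunc (ξ η : H) : (H →L[ℂ] H) →L[ℂ] ℂ :=
  (innerSL ℂ η).comp (ContinuousLinearMap.apply ℂ H ξ)

/-- A bounded functional on `B(H)` is *normal* if it lies in the norm closure of the
linear span of the vector functionals, i.e. it comes from a trace class operator.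
The normal functionals on a von Neumann algebra `M ⊆ B(H)` are exactly the
restrictions of these. -/
def NormalFn (ω : (H →L[ℂ] H) →L[ℂ] ℂ) : Prop :=
  ω ∈ closure (Submodule.span ℂ (Set.range fun p : H × H => vecFunc p.1 p.2) : Set _)

/-- A state of `B(H)` (every state of a von Neumann subalgebra of `B(H)` extends to one). -/
def IsStateFn (m : (H →L[ℂ] H) → ℂ) : Prop :=
  IsLinearMap ℂ m ∧ m 1 = 1 ∧ ∀ x, 0 ≤ m (star x * x)

/-- A character of the `C^*`-algebra `S ⊆ B(H)` (given with some bounded linear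
extension to `B(H)`): a multiplicative functional which is nonzero on `S`. -/
def IsCharacterOn (S : Set (H →L[ℂ] H)) (χ : (H →L[ℂ] H) →L[ℂ] ℂ) : Prop :=
  (∀ a ∈ S, ∀ b ∈ S, χ (a * b) = χ a * χ b) ∧ ∃ a ∈ S, χ a ≠ 0

/-- Complete positivity of a map on `B(H)`: each matrix amplification preserves
positivity; positivity in the C^*-algebra `M_k(B(H))` is witnessed as `star B * B`. -/
def CompletelyPositiveFn (T : (H →L[ℂ] H) → (H →L[ℂ] H)) : Prop :=
  ∀ (k : ℕ) (A : Matrix (Fin k) (Fin k) (H →L[ℂ] H)),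
    (∃ B : Matrix (Fin k) (Fin k) (H →L[ℂ] H), A = star B * B) →
      ∃ C : Matrix (Fin k) (Fin k) (H →L[ℂ] H), A.map T = star C * C

/-- A conditional expectation (unital positive linear projection) of `B(H)`
onto the subset `S`. -/
def IsCondExpOnto (E : (H →L[ℂ] H) → (H →L[ℂ] H)) (S : Set (H →L[ℂ] H)) : Prop :=
  IsLinearMap ℂ E ∧ E 1 = 1 ∧ (∀ x, E x ∈ S) ∧ (∀ x ∈ S, E x = x) ∧
    ∀ x, (E (star x * x)).IsPositive

/-- Nuclearity of the `C^*`-algebra `S ⊆ B(H)`, in the form of the completely positive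
approximation property: the identity of `S` is a pointwise norm limit of finite rank
contractive completely positive maps. -/
def NuclearSet (S : Set (H →L[ℂ] H)) : Prop :=
  ∃ (ι : Type) (l : Filter ι), l.NeBot ∧
    ∃ T : ι → ((H →L[ℂ] H) → (H →L[ℂ] H)),
      (∀ j, IsLinearMap ℂ (T j) ∧ CompletelyPositiveFn (T j) ∧
        FiniteDimensional ℂ ↥(Submodule.span ℂ (Set.range (T j))) ∧
        (∀ x ∈ S, T j x ∈ S) ∧ ∀ x, ‖T j x‖ ≤ ‖x‖) ∧
      ∀ x ∈ S, Tendsto (fun j => ‖T j x - x‖) l (𝓝 0)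

end Functionals

/-- A (von Neumann algebraic) locally compact quantum group `(M, Δ)`, presented on the
GNS space `H` of its left invariant weight, via its multiplicative unitary `W` acting on
`HH`, a model of the Hilbert space tensor product `H ⊗ H`. The comultiplication is
`Δ(x) = W*(1 ⊗ x)W`. Slice maps `lslice ω = ω ⊗ id` and `rslice ω = id ⊗ ω` are part of
the data, pinned down by their defining inner product identities, and `conv` is the
convolution product `ω * χ = (ω ⊗ χ) ∘ Δ` of functionals. -/
structure QGroup (H HH : Type)
    [NormedAddCommGroup H] [InnerProductSpace ℂ H] [CompleteSpace H]
    [NormedAddCommGroup HH] [InnerProductSpace ℂ HH] [CompleteSpace HH] where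
  /-- the tensor embedding `H × H → H ⊗ H = HH` -/
  tensor : H →ₗ[ℂ] H →ₗ[ℂ] HH
  tensor_inner : ∀ a b c d : H, ⟪tensor a c, tensor b d⟫ = ⟪a, b⟫ * ⟪c, d⟫
  tensor_dense : Dense (Submodule.span ℂ (Set.range fun p : H × H => tensor p.1 p.2) : Set HH)
  /-- the tensor flip `Σ` -/
  flipU : HH →L[ℂ] HH
  flip_tensor : ∀ a b : H, flipU (tensor a b) = tensor b a
  /-- amplification of operators: `tens a b = a ⊗ b` -/
  tens : (H →L[ℂ] H) → (H →L[ℂ] H) → (HH →L[ℂ] HH)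
  tens_apply : ∀ a b ξ η, tens a b (tensor ξ η) = tensor (a ξ) (b η)
  tens_one : tens 1 1 = 1
  tens_mul : ∀ a b c d, tens a b * tens c d = tens (a * c) (b * d)
  tens_star : ∀ a b, star (tens a b) = tens (star a) (star b)
  tens_add_left : ∀ a b c, tens (a + b) c = tens a c + tens b c
  tens_add_right : ∀ a b c, tens a (b + c) = tens a b + tens a c
  tens_smul_left : ∀ (μ : ℂ) a b, tens (μ • a) b = μ • tens a b
  tens_smul_right : ∀ (μ : ℂ) a b, tens a (μ • b) = μ • tens a b
  /-- the underlying von Neumann algebra -/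
  M : VonNeumannAlgebra H
  /-- the multiplicative unitary -/
  W : HH →L[ℂ] HH
  W_unitary : W ∈ unitary (HH →L[ℂ] HH)
  /-- the left slice map `lslice ω X = (ω ⊗ id)(X)` -/
  lslice : ((H →L[ℂ] H) →L[ℂ] ℂ) → (HH →L[ℂ] HH) → (H →L[ℂ] H)
  /-- the right slice map `rslice ω X = (id ⊗ ω)(X)` -/
  rslice : ((H →L[ℂ] H) →L[ℂ] ℂ) → (HH →L[ℂ] HH) → (H →L[ℂ] H)
  rslice_vec : ∀ (ξ η : H) (X : HH →L[ℂ] HH) (α β : H),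
    ⟪β, rslice (vecFunc ξ η) X α⟫ = ⟪tensor β η, X (tensor α ξ)⟫
  lslice_vec : ∀ (ξ η : H) (X : HH →L[ℂ] HH) (α β : H),
    ⟪β, lslice (vecFunc ξ η) X α⟫ = ⟪tensor η β, X (tensor ξ α)⟫
  lslice_apply : ∀ ω X (α β : H), ⟪β, lslice ω X α⟫ = ω (rslice (vecFunc α β) X)
  rslice_apply : ∀ ω X (α β : H), ⟪β, rslice ω X α⟫ = ω (lslice (vecFunc α β) X)
  /-- convolution of functionals: `conv ω χ = (ω ⊗ χ) ∘ Δ` -/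
  conv : ((H →L[ℂ] H) →L[ℂ] ℂ) → ((H →L[ℂ] H) →L[ℂ] ℂ) → ((H →L[ℂ] H) →L[ℂ] ℂ)
  conv_apply : ∀ ω χ x, conv ω χ x = ω (rslice χ (star W * tens 1 x * W))
  /-- the algebra `A` of "continuous functions" sits inside `M` -/
  rho_mem : ∀ ω, rslice ω W ∈ M

namespace QGroup

variable {H HH : Type} [NormedAddCommGroup H] [InnerProductSpace ℂ H] [CompleteSpace H]
  [NormedAddCommGroup HH] [InnerProductSpace ℂ HH] [CompleteSpace HH]
variable (Q : QGroup H HH)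

/-- The comultiplication `Δ(x) = W*(1 ⊗ x)W`. -/
def Delta (x : H →L[ℂ] H) : HH →L[ℂ] HH := star Q.W * Q.tens 1 x * Q.W

/-- The dual multiplicative unitary `Ŵ = Σ W* Σ`. -/
def What : HH →L[ℂ] HH := Q.flipU * star Q.W * Q.flipU

/-- The dual comultiplication `Δ̂(x) = Ŵ*(1 ⊗ x)Ŵ`. -/
def DeltaHat (x : H →L[ℂ] H) : HH →L[ℂ] HH := star Q.What * Q.tens 1 x * Q.What

/-- `λ(ω) = (ω ⊗ id)(W)`. -/
def lam (ω : (H →L[ℂ] H) →L[ℂ] ℂ) : H →L[ℂ] H := Q.lslice ω Q.W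

/-- `(id ⊗ ω)(W)`. -/
def rho (ω : (H →L[ℂ] H) →L[ℂ] ℂ) : H →L[ℂ] H := Q.rslice ω Q.W

/-- The `C^*`-algebra `A`, the norm closure of `{(id ⊗ ω)(W) : ω normal}`. -/
def Aalg : Set (H →L[ℂ] H) := closure {x | ∃ ω, NormalFn ω ∧ x = Q.rho ω}

/-- The dual `C^*`-algebra `Â`, the norm closure of `{λ(ω) : ω normal}`. -/
def Ahat : Set (H →L[ℂ] H) := closure {x | ∃ ω, NormalFn ω ∧ x = Q.lam ω}

/-- The dual von Neumann algebra `M̂`, the double commutant of `Â`. -/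
def Mhat : Set (H →L[ℂ] H) := Set.centralizer (Set.centralizer (Q.Ahat ∪ (star '' Q.Ahat)))

/-- `(M, Δ)` admits an invariant mean: a state of `M` (extended to `B(H)`) which is both
left and right invariant. -/
def HasInvariantMean : Prop :=
  ∃ m : (H →L[ℂ] H) → ℂ, IsStateFn m ∧
    (∀ ω, NormalFn ω → ∀ x ∈ Q.M, m (Q.lslice ω (Q.Delta x)) = ω 1 * m x) ∧
    (∀ ω, NormalFn ω → ∀ x ∈ Q.M, m (Q.rslice ω (Q.Delta x)) = ω 1 * m x)

/-- Strong Voiculescu amenability: a net of unit vectors `ξ_j` with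
`‖W*(η ⊗ ξ_j) - η ⊗ ξ_j‖ → 0` for every `η`. -/
def StronglyAmenable : Prop :=
  ∃ (ι : Type) (l : Filter ι), l.NeBot ∧ ∃ ξ : ι → H, (∀ j, ‖ξ j‖ = 1) ∧
    ∀ η : H, Tendsto (fun j => ‖star Q.W (Q.tensor η (ξ j)) - Q.tensor η (ξ j)‖) l (𝓝 0)

/-- An `Â`-linear state of `M̂` (extended to `B(H)`): `ϱ(a x b) = ϱ(a)ϱ(x)ϱ(b)` for
`a, b ∈ Â`, `x ∈ M̂`. -/
def AhatLinearState (ϱ : (H →L[ℂ] H) → ℂ) : Prop :=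
  IsStateFn ϱ ∧ ∀ a ∈ Q.Ahat, ∀ b ∈ Q.Ahat, ∀ x ∈ Q.Mhat, ϱ (a * x * b) = ϱ a * ϱ x * ϱ b

/-- A (nondegenerate) representation `π` of the `C^*`-algebra `A` on a Hilbert space `Hp`,
together with a model `HpH` of `Hp ⊗ H` and the unitary `Wp = (π ⊗ id)(W)`, which is
pinned down by the identity `⟪β ⊗ η, (π ⊗ id)(W)(α ⊗ ξ)⟫ = ⟪β, π((id ⊗ ω_{ξ,η})(W)) α⟫`. -/
def IsRepOn (Hp HpH : Type) [NormedAddCommGroup Hp] [InnerProductSpace ℂ Hp]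
    [CompleteSpace Hp] [NormedAddCommGroup HpH] [InnerProductSpace ℂ HpH] [CompleteSpace HpH]
    (π : (H →L[ℂ] H) → (Hp →L[ℂ] Hp)) (tp : Hp →ₗ[ℂ] H →ₗ[ℂ] HpH)
    (Wp : HpH →L[ℂ] HpH) : Prop :=
  (∀ a ∈ Q.Aalg, ∀ b ∈ Q.Aalg, π (a + b) = π a + π b) ∧
  (∀ (c : ℂ), ∀ a ∈ Q.Aalg, π (c • a) = c • π a) ∧
  (∀ a ∈ Q.Aalg, ∀ b ∈ Q.Aalg, π (a * b) = π a * π b) ∧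
  (∀ a ∈ Q.Aalg, π (star a) = star (π a)) ∧
  (∀ a ∈ Q.Aalg, ‖π a‖ ≤ ‖a‖) ∧
  (∀ (a b : Hp) (c d : H), ⟪tp a c, tp b d⟫ = ⟪a, b⟫ * ⟪c, d⟫) ∧
  Dense (Submodule.span ℂ (Set.range fun p : Hp × H => tp p.1 p.2) : Set HpH) ∧
  Wp ∈ unitary (HpH →L[ℂ] HpH) ∧
  ∀ (α β : Hp) (ξ η : H), ⟪tp β η, Wp (tp α ξ)⟫ = ⟪β, π (Q.rho (vecFunc ξ η)) α⟫

/-- Cyclicity of a representation of `A`. -/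
def IsCyclicRep (Hp : Type) [NormedAddCommGroup Hp] [InnerProductSpace ℂ Hp] [CompleteSpace Hp]
    (π : (H →L[ℂ] H) → (Hp →L[ℂ] Hp)) : Prop :=
  ∃ ζ : Hp, Dense (Submodule.span ℂ {v : Hp | ∃ a ∈ Q.Aalg, v = π a ζ} : Set Hp)

end QGroup

/-- A discrete quantum group: a locally compact quantum group whose underlying von Neumann
algebra decomposes as `M = ⊕_{α ∈ I} M_{n_α}(ℂ)` with matrix units `e α k l` diagonalising
the left invariant weight `φ = ⊕_α Tr(h_α ·)`, `h_α = ∑_k ν α k • e α k k`. The data also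
records the GNS map `Λ` of `φ` (pinned on the finitely supported part `n_φ`), the value of
the weight `φ` (and `φ ⊗ φ`), the modular group `Δ_φ^{it} = Dphi t`, the modular
conjugations `J`, `Ĵ` and the cyclic vector `ξ̂` of the dual Haar state. -/
structure DiscreteQGroup (H HH : Type)
    [NormedAddCommGroup H] [InnerProductSpace ℂ H] [CompleteSpace H]
    [NormedAddCommGroup HH] [InnerProductSpace ℂ HH] [CompleteSpace HH]
    extends QGroup H HH where
  /-- index set of the matrix blocks -/
  I : Type
  /-- sizes of the matrix blocks -/
  nn : I → ℕ
  npos : ∀ α, 0 < nn α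
  /-- matrix units -/
  e : (α : I) → Fin (nn α) → Fin (nn α) → (H →L[ℂ] H)
  e_mem : ∀ α k l, e α k l ∈ M
  e_star : ∀ α k l, star (e α k l) = e α l k
  e_mul : ∀ α k l k' l', e α k l * e α k' l' = if l = k' then e α k l' else 0
  e_orth : ∀ α β, α ≠ β → ∀ k l k' l', e α k l * e β k' l' = 0
  z_comm : ∀ α x, x ∈ M → x * (∑ k, e α k k) = (∑ k, e α k k) * x
  z_hasSum : ∀ ξ : H, HasSum (fun α => (∑ k, e α k k) ξ) ξ
  block_span : ∀ α, ∀ x ∈ M, ∃ c : Fin (nn α) → Fin (nn α) → ℂ,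
      x * (∑ k, e α k k) = ∑ k, ∑ l, c k l • e α k l
  /-- eigenvalues of the density matrices `h_α` -/
  ν : (α : I) → Fin (nn α) → ℝ
  ν_pos : ∀ α k, 0 < ν α k
  /-- the left invariant weight, on positive elements -/
  phi : (H →L[ℂ] H) → ℝ≥0∞
  phi_add : ∀ x y : H →L[ℂ] H, x.IsPositive → y.IsPositive → phi (x + y) = phi x + phi y
  phi_smul : ∀ (c : ℝ) (x : H →L[ℂ] H), 0 ≤ c → x.IsPositive →
      phi (c • x) = ENNReal.ofReal c * phi x
  phi_e : ∀ α k, phi (e α k k) = ENNReal.ofReal (ν α k)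
  /-- the complex-valued extension of `φ` to (a linear extension off) `m_φ` -/
  phiC : (H →L[ℂ] H) →ₗ[ℂ] ℂ
  phiC_e : ∀ α k l, phiC (e α k l) = if k = l then (ν α k : ℂ) else 0
  phiC_phi : ∀ x : H →L[ℂ] H, x.IsPositive → phi x ≠ ⊤ → phiC x = ((phi x).toReal : ℂ)
  /-- the tensor product weight `φ ⊗ φ`, on positive elements -/
  phi2 : (HH →L[ℂ] HH) → ℝ≥0∞
  phi2_tens : ∀ a b : H →L[ℂ] H, a.IsPositive → b.IsPositive →
      phi2 (tens a b) = phi a * phi b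
  phi2_add : ∀ X Y : HH →L[ℂ] HH, X.IsPositive → Y.IsPositive → phi2 (X + Y) = phi2 X + phi2 Y
  /-- the GNS map `Λ` of `φ` (its restriction to the finitely supported part is the
  canonical one; it is extended linearly) -/
  Lam : (H →L[ℂ] H) →ₗ[ℂ] H
  Lam_inner : ∀ x y : H →L[ℂ] H, x ∈ M → y ∈ M →
      (∃ F : Finset I, x * (∑ α ∈ F, ∑ k, e α k k) = x) →
      (∃ F : Finset I, y * (∑ α ∈ F, ∑ k, e α k k) = y) →
      ⟪Lam x, Lam y⟫ = phiC (star x * y)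
  Lam_dense : Dense {ξ : H | ∃ x, x ∈ M ∧
      (∃ F : Finset I, x * (∑ α ∈ F, ∑ k, e α k k) = x) ∧ ξ = Lam x}
  /-- the GNS map `Λ ⊗ Λ` of `φ ⊗ φ` -/
  Lam2 : (HH →L[ℂ] HH) →ₗ[ℂ] HH
  Lam2_tens : ∀ a b, Lam2 (tens a b) = tensor (Lam a) (Lam b)
  /-- the defining property of the multiplicative unitary:
  `W*(Λ(x) ⊗ Λ(y)) = (Λ ⊗ Λ)(Δ(y)(x ⊗ 1))` -/
  W_Lam : ∀ x y : H →L[ℂ] H, x ∈ M → y ∈ M →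
      (∃ F : Finset I, x * (∑ α ∈ F, ∑ k, e α k k) = x) →
      (∃ F : Finset I, y * (∑ α ∈ F, ∑ k, e α k k) = y) →
      star W (tensor (Lam x) (Lam y)) = Lam2 ((star W * tens 1 y * W) * tens x 1)
  /-- the modular group of `φ`: `Dphi t = Δ_φ^{it}` -/
  Dphi : ℝ → (H →L[ℂ] H)
  Dphi_unitary : ∀ t, Dphi t ∈ unitary (H →L[ℂ] H)
  Dphi_zero : Dphi 0 = 1
  Dphi_add : ∀ s t, Dphi (s + t) = Dphi s * Dphi t
  Dphi_cont : ∀ ξ : H, Continuous fun t => Dphi t ξ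
  Dphi_e : ∀ (t : ℝ) α k l,
      Dphi t * e α k l * star (Dphi t)
        = Complex.exp (Complex.I * (t : ℂ) * (Real.log (ν α k / ν α l) : ℂ)) • e α k l
  Dphi_Lam : ∀ (t : ℝ) (x : H →L[ℂ] H), x ∈ M →
      (∃ F : Finset I, x * (∑ α ∈ F, ∑ k, e α k k) = x) →
      Dphi t (Lam x) = Lam (Dphi t * x * star (Dphi t))
  /-- the modular conjugation `J` of `φ` -/
  Jmod : H → H
  Jmod_add : ∀ ξ η, Jmod (ξ + η) = Jmod ξ + Jmod η
  Jmod_smul : ∀ (c : ℂ) ξ, Jmod (c • ξ) = (starRingEnd ℂ) c • Jmod ξ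
  Jmod_invol : ∀ ξ, Jmod (Jmod ξ) = ξ
  Jmod_inner : ∀ ξ η, ⟪Jmod ξ, Jmod η⟫ = ⟪η, ξ⟫
  /-- the modular conjugation `Ĵ` of the dual weight `φ̂` -/
  Jhat : H → H
  Jhat_add : ∀ ξ η, Jhat (ξ + η) = Jhat ξ + Jhat η
  Jhat_smul : ∀ (c : ℂ) ξ, Jhat (c • ξ) = (starRingEnd ℂ) c • Jhat ξ
  Jhat_invol : ∀ ξ, Jhat (Jhat ξ) = ξ
  Jhat_inner : ∀ ξ η, ⟪Jhat ξ, Jhat η⟫ = ⟪η, ξ⟫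
  /-- `Ĵ ⊗ J` on `HH` -/
  JJ : HH → HH
  JJ_tensor : ∀ a b, JJ (tensor a b) = tensor (Jhat a) (Jmod b)
  /-- `(Ĵ ⊗ J) W (Ĵ ⊗ J) = W*` -/
  JJ_W : ∀ ζ : HH, W (JJ ζ) = JJ (star W ζ)
  /-- the cyclic unit vector implementing the dual Haar state `φ̂ = ω_{ξ̂}` -/
  xihat : H
  xihat_norm : ‖xihat‖ = 1

namespace DiscreteQGroup

variable {H HH : Type} [NormedAddCommGroup H] [InnerProductSpace ℂ H] [CompleteSpace H]
  [NormedAddCommGroup HH] [InnerProductSpace ℂ HH] [CompleteSpace HH]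
variable (Q : DiscreteQGroup H HH)

/-- The minimal central projection `z_α`. -/
def z (α : Q.I) : H →L[ℂ] H := ∑ k, Q.e α k k

/-- The central projection `z_F = ∑_{α ∈ F} z_α` for finite `F ⊆ I`. -/
def zF (F : Finset Q.I) : H →L[ℂ] H := ∑ α ∈ F, Q.z α

/-- Finitely supported elements of `M` (a dense subspace of `n_φ`). -/
def FinSupp (x : H →L[ℂ] H) : Prop := ∃ F : Finset Q.I, x * Q.zF F = x

/-- The modular automorphism group `σ^φ_t = Ad(Δ_φ^{it})` of the left Haar weight. -/
def sigma (t : ℝ) (x : H →L[ℂ] H) : H →L[ℂ] H := Q.Dphi t * x * star (Q.Dphi t)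

/-- The natural positive cone `P_φ^♮`, the closure of `{x J Λ(x)}`. -/
def NatCone : Set H :=
  closure {ξ : H | ∃ x, x ∈ Q.M ∧ Q.FinSupp x ∧ ξ = x (Q.Jmod (Q.Lam x))}

end DiscreteQGroup


variable {H HH : Type} [NormedAddCommGroup H] [InnerProductSpace ℂ H] [CompleteSpace H]
  [NormedAddCommGroup HH] [InnerProductSpace ℂ HH] [CompleteSpace HH]

lemma afn_mean_real
    (mR : BoundedContinuousFunction ℝ ℂ →ₗ[ℂ] ℂ)
    (hm1 : mR 1 = 1)
    (hmpos : ∀ f : BoundedContinuousFunction ℝ ℂ, (∀ t, 0 ≤ f t) → 0 ≤ mR f)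
    (u : BoundedContinuousFunction ℝ ℂ) (hu : ∀ t, (u t).im = 0) : (mR u).im = 0 := by
  have h := hmpos (u + ((‖u‖ : ℝ) : ℂ) • (1 : BoundedContinuousFunction ℝ ℂ)) (by
    intro t
    rw [Complex.le_def]
    have h1 := u.norm_coe_le_norm t
    have h2 := Complex.abs_re_le_norm (u t)
    have h3 := abs_le.1 (h2.trans h1)
    simp [hu t]
    linarith [h3.1])
  rw [Complex.le_def] at h
  have h2 := h.2
  rw [map_add, map_smul, hm1] at h2
  simp at h2
  exact h2.symm

lemma afn_mean_bound
    (mR : BoundedContinuousFunction ℝ ℂ →ₗ[ℂ] ℂ)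
    (hm1 : mR 1 = 1)
    (hmpos : ∀ f : BoundedContinuousFunction ℝ ℂ, (∀ t, 0 ≤ f t) → 0 ≤ mR f)
    (g : BoundedContinuousFunction ℝ ℂ) (C : ℝ) (hg : ∀ t, ‖g t‖ ≤ C) : ‖mR g‖ ≤ C := by
  have key : ∀ h : BoundedContinuousFunction ℝ ℂ, (∀ t, ‖h t‖ ≤ C) → (mR h).re ≤ C := by
    intro h hh
    have r1 := afn_mean_real mR hm1 hmpos (h + star h) (by intro t; simp)
    have r2 := afn_mean_real mR hm1 hmpos (Complex.I • (h - star h)) (by intro t; simp)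
    have r3 := hmpos (((2 * C : ℝ) : ℂ) • (1 : BoundedContinuousFunction ℝ ℂ) - (h + star h)) (by
      intro t
      rw [Complex.le_def]
      have h3 := (Complex.re_le_norm (h t)).trans (hh t)
      simp
      linarith)
    rw [Complex.le_def] at r3
    have r4 := r3.1
    simp only [map_add, map_sub, map_smul, hm1] at r1 r2 r4
    simp at r1 r2 r4
    linarith
  obtain ⟨c, hc, hc2⟩ : ∃ c : ℂ, ‖c‖ = 1 ∧ c * mR g = (‖mR g‖ : ℂ) := by
    by_cases h0 : mR g = 0
    · exact ⟨1, by simp, by simp [h0]⟩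
    · refine ⟨(‖mR g‖ : ℂ) / mR g, ?_, ?_⟩
      · have : ‖mR g‖ ≠ 0 := by simpa using h0
        simp [this]
      · field_simp
  have h := key (c • g) (by intro t; simpa [hc] using hg t)
  rw [map_smul, smul_eq_mul, hc2] at h
  simpa using h

lemma afn_mean_char
    (mR : BoundedContinuousFunction ℝ ℂ →ₗ[ℂ] ℂ)
    (hminv : ∀ (f g : BoundedContinuousFunction ℝ ℂ) (s : ℝ),
        (∀ t, g t = f (t + s)) → mR g = mR f)
    (f : BoundedContinuousFunction ℝ ℂ) (c : ℝ) (hc : c ≠ 0) (w : ℂ)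
    (hf : ∀ t : ℝ, f t = Complex.exp (Complex.I * t * c) * w) : mR f = 0 := by
  have h := hminv f (-f) (Real.pi / c) (by
    intro t
    have hc' : (c : ℂ) ≠ 0 := by exact_mod_cast hc
    have : Complex.I * ((t + Real.pi / c : ℝ) : ℂ) * c
        = Complex.I * t * c + Real.pi * Complex.I := by
      push_cast
      field_simp
    rw [hf (t + Real.pi / c), this, Complex.exp_add, Complex.exp_pi_mul_I]
    simp [hf t])
  rw [map_neg] at h
  exact self_eq_neg.1 h.symm

/-- `ω'` is the average of `ω` under `σ`. -/
def AfnAvg (Q : DiscreteQGroup H HH) (mR : BoundedContinuousFunction ℝ ℂ →ₗ[ℂ] ℂ)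
    (ω ω' : (H →L[ℂ] H) →L[ℂ] ℂ) : Prop :=
  ∀ x, ∃ f : BoundedContinuousFunction ℝ ℂ, (∀ t, f t = ω (Q.sigma t x)) ∧ ω' x = mR f

lemma afn_sigma_norm (Q : DiscreteQGroup H HH) (t : ℝ) (x : H →L[ℂ] H) :
    ‖Q.sigma t x‖ ≤ ‖x‖ := by
  have h1 : ∀ u ∈ unitary (H →L[ℂ] H), ‖u‖ ≤ 1 := fun u hu => by
    have h := CStarRing.norm_star_mul_self (x := u)
    rw [(Unitary.mem_iff.1 hu).1] at h
    have h' : ‖(1 : H →L[ℂ] H)‖ ≤ 1 := ContinuousLinearMap.norm_id_le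
    nlinarith [norm_nonneg u]
  have h2 := h1 _ (Q.Dphi_unitary t)
  have h3 : ‖star (Q.Dphi t)‖ ≤ 1 := by rwa [norm_star]
  calc ‖Q.Dphi t * x * star (Q.Dphi t)‖ ≤ ‖Q.Dphi t‖ * ‖x‖ * ‖star (Q.Dphi t)‖ :=
        (norm_mul_le _ _).trans (by gcongr; exact norm_mul_le _ _)
    _ ≤ 1 * ‖x‖ * 1 := by gcongr
    _ = ‖x‖ := by ring

lemma afn_star (Q : DiscreteQGroup H HH) (t : ℝ) : star (Q.Dphi t) = Q.Dphi (-t) := by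
  have h1 : star (Q.Dphi t) * Q.Dphi t = 1 := (Unitary.mem_iff.1 (Q.Dphi_unitary t)).1
  have h2 : Q.Dphi t * Q.Dphi (-t) = 1 := by
    rw [← Q.Dphi_add, add_neg_cancel, Q.Dphi_zero]
  exact left_inv_eq_right_inv h1 h2

lemma afn_vec (Q : DiscreteQGroup H HH) (t : ℝ) (x : H →L[ℂ] H) (ξ η : H) :
    vecFunc ξ η (Q.sigma t x) = ⟪Q.Dphi (-t) η, x (Q.Dphi (-t) ξ)⟫ := by
  have : vecFunc ξ η (Q.sigma t x) = ⟪η, Q.Dphi t (x (star (Q.Dphi t) ξ))⟫ := rfl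
  rw [this, ← afn_star, ContinuousLinearMap.star_eq_adjoint,
    ContinuousLinearMap.adjoint_inner_left]

lemma afn_sigma_sigma (Q : DiscreteQGroup H HH) (s t : ℝ) (x : H →L[ℂ] H) :
    Q.sigma t (Q.sigma s x) = Q.sigma (t + s) x := by
  simp only [DiscreteQGroup.sigma, Q.Dphi_add, star_mul, mul_assoc]

lemma afn_sub (Q : DiscreteQGroup H HH) (mR : BoundedContinuousFunction ℝ ℂ →ₗ[ℂ] ℂ)
    {a a' b b' : (H →L[ℂ] H) →L[ℂ] ℂ} (ha : AfnAvg Q mR a a') (hb : AfnAvg Q mR b b') :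
    AfnAvg Q mR (a - b) (a' - b') := by
  intro x
  obtain ⟨f, hf, hf'⟩ := ha x
  obtain ⟨g, hg, hg'⟩ := hb x
  exact ⟨f - g, by intro t; simp [hf, hg], by simp [hf', hg']⟩

lemma afn_add (Q : DiscreteQGroup H HH) (mR : BoundedContinuousFunction ℝ ℂ →ₗ[ℂ] ℂ)
    {a a' b b' : (H →L[ℂ] H) →L[ℂ] ℂ} (ha : AfnAvg Q mR a a') (hb : AfnAvg Q mR b b') :
    AfnAvg Q mR (a + b) (a' + b') := by
  intro x
  obtain ⟨f, hf, hf'⟩ := ha x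
  obtain ⟨g, hg, hg'⟩ := hb x
  exact ⟨f + g, by intro t; simp [hf, hg], by simp [hf', hg']⟩

lemma afn_smul (Q : DiscreteQGroup H HH) (mR : BoundedContinuousFunction ℝ ℂ →ₗ[ℂ] ℂ)
    {a a' : (H →L[ℂ] H) →L[ℂ] ℂ} (c : ℂ) (ha : AfnAvg Q mR a a') :
    AfnAvg Q mR (c • a) (c • a') := by
  intro x
  obtain ⟨f, hf, hf'⟩ := ha x
  exact ⟨c • f, by intro t; simp [hf], by simp [hf']⟩

lemma afn_norm (Q : DiscreteQGroup H HH) (mR : BoundedContinuousFunction ℝ ℂ →ₗ[ℂ] ℂ)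
    (hm1 : mR 1 = 1)
    (hmpos : ∀ f : BoundedContinuousFunction ℝ ℂ, (∀ t, 0 ≤ f t) → 0 ≤ mR f)
    {a a' : (H →L[ℂ] H) →L[ℂ] ℂ} (ha : AfnAvg Q mR a a') : ‖a'‖ ≤ ‖a‖ := by
  refine ContinuousLinearMap.opNorm_le_bound _ (norm_nonneg _) fun x => ?_
  obtain ⟨f, hf, hf'⟩ := ha x
  rw [hf']
  refine afn_mean_bound mR hm1 hmpos f _ fun t => ?_
  rw [hf]
  exact (a.le_opNorm _).trans (by gcongr; exact afn_sigma_norm Q t x)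

lemma afn_cont (Q : DiscreteQGroup H HH) (ω : (H →L[ℂ] H) →L[ℂ] ℂ) (hω : NormalFn ω)
    (x : H →L[ℂ] H) : Continuous fun t => ω (Q.sigma t x) := by
  have hspan : ∀ a ∈ Submodule.span ℂ (Set.range fun p : H × H => vecFunc p.1 p.2),
      Continuous fun t => a (Q.sigma t x) := by
    intro a ha
    induction ha using Submodule.span_induction with
    | mem a ha =>
      obtain ⟨p, rfl⟩ := ha
      simp only [afn_vec]
      have h1 := (Q.Dphi_cont p.1).comp continuous_neg
      have h2 := (Q.Dphi_cont p.2).comp continuous_neg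
      exact h2.inner (x.continuous.comp h1)
    | zero => simpa using continuous_const
    | add a b _ _ ha hb => exact ha.add hb
    | smul c a _ ha => simpa using ha.const_mul c
  obtain ⟨u, hu, hlim⟩ := mem_closure_iff_seq_limit.1 hω
  have hunif : TendstoUniformly (fun n t => u n (Q.sigma t x)) (fun t => ω (Q.sigma t x))
      atTop := by
    rw [Metric.tendstoUniformly_iff]
    intro ε hε
    have h := Metric.tendsto_nhds.1 hlim (ε / (‖x‖ + 1)) (by positivity)
    filter_upwards [h] with n hn t
    rw [dist_comm, dist_eq_norm] at *
    calc ‖u n (Q.sigma t x) - ω (Q.sigma t x)‖ = ‖(u n - ω) (Q.sigma t x)‖ := by simp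
      _ ≤ ‖u n - ω‖ * ‖Q.sigma t x‖ := ContinuousLinearMap.le_opNorm _ _
      _ ≤ ‖u n - ω‖ * (‖x‖ + 1) := by
        gcongr
        linarith [afn_sigma_norm Q t x]
      _ < ε := by
        exact (lt_div_iff₀ (by positivity)).1 (by rw [norm_sub_rev]; exact hn)
  exact hunif.continuous (Frequently.of_forall fun n => hspan _ (hu n))

lemma afn_exists (Q : DiscreteQGroup H HH) (mR : BoundedContinuousFunction ℝ ℂ →ₗ[ℂ] ℂ)
    (hm1 : mR 1 = 1)
    (hmpos : ∀ f : BoundedContinuousFunction ℝ ℂ, (∀ t, 0 ≤ f t) → 0 ≤ mR f)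
    (ω : (H →L[ℂ] H) →L[ℂ] ℂ) (hω : NormalFn ω) : ∃ ω', AfnAvg Q mR ω ω' := by
  have hb : ∀ x t, ‖ω (Q.sigma t x)‖ ≤ ‖ω‖ * ‖x‖ := fun x t =>
    (ω.le_opNorm _).trans (by gcongr; exact afn_sigma_norm Q t x)
  let F : (H →L[ℂ] H) → BoundedContinuousFunction ℝ ℂ := fun x =>
    BoundedContinuousFunction.ofNormedAddCommGroup _ (afn_cont Q ω hω x) _ (hb x)
  have hF : ∀ x t, F x t = ω (Q.sigma t x) := fun x t => rfl
  let L : (H →L[ℂ] H) →ₗ[ℂ] ℂ :=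
    { toFun := fun x => mR (F x)
      map_add' := by
        intro x y
        rw [← map_add]
        congr 1
        ext t
        simp [hF, DiscreteQGroup.sigma, mul_add, add_mul]
      map_smul' := by
        intro c x
        rw [RingHom.id_apply, ← map_smul]
        congr 1
        ext t
        simp [hF, DiscreteQGroup.sigma] }
  refine ⟨L.mkContinuous ‖ω‖ fun x => afn_mean_bound mR hm1 hmpos _ _ (hb x), fun x =>
    ⟨F x, hF x, rfl⟩⟩

/-- eigenvectors of the modular group -/
def AfnEig (Q : DiscreteQGroup H HH) : Set H :=
  {ξ | ∃ a : ℝ, ∀ t : ℝ, Q.Dphi t ξ = Complex.exp (Complex.I * t * a) • ξ}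

lemma afn_eig_dense (Q : DiscreteQGroup H HH) :
    Dense (Submodule.span ℂ (AfnEig Q) : Set H) := by
  refine Q.Lam_dense.mono ?_
  rintro ξ ⟨x, hx, ⟨F, hF⟩, rfl⟩
  rw [← hF, Finset.mul_sum, map_sum]
  refine Submodule.sum_mem _ fun α _ => ?_
  obtain ⟨c, hc⟩ := Q.block_span α x hx
  rw [hc, map_sum]
  refine Submodule.sum_mem _ fun k _ => ?_
  rw [map_sum]
  refine Submodule.sum_mem _ fun l _ => ?_
  rw [map_smul]
  refine Submodule.smul_mem _ _ (Submodule.subset_span ⟨Real.log (Q.ν α k / Q.ν α l), fun t => ?_⟩)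
  rw [Q.Dphi_Lam t _ (Q.e_mem α k l) ⟨{α}, ?_⟩, Q.Dphi_e, map_smul]
  simp [Finset.mul_sum, Q.e_mul]

lemma afn_eig_avg (Q : DiscreteQGroup H HH) (mR : BoundedContinuousFunction ℝ ℂ →ₗ[ℂ] ℂ)
    (hm1 : mR 1 = 1)
    (hminv : ∀ (f g : BoundedContinuousFunction ℝ ℂ) (s : ℝ),
        (∀ t, g t = f (t + s)) → mR g = mR f)
    (ξ η : H) (hξ : ξ ∈ AfnEig Q) (hη : η ∈ AfnEig Q) :
    ∃ ω', NormalFn ω' ∧ AfnAvg Q mR (vecFunc ξ η) ω' := by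
  obtain ⟨a, ha⟩ := hξ
  obtain ⟨b, hb⟩ := hη
  have hn : NormalFn (vecFunc ξ η) := subset_closure (Submodule.subset_span ⟨(ξ, η), rfl⟩)
  have key : ∀ x t, vecFunc ξ η (Q.sigma t x)
      = Complex.exp (Complex.I * t * ((b - a : ℝ) : ℂ)) * vecFunc ξ η x := by
    intro x t
    have h0 : vecFunc ξ η x = ⟪η, x ξ⟫ := rfl
    rw [afn_vec, ha, hb, map_smul, inner_smul_left, inner_smul_right, ← mul_assoc,
      ← Complex.exp_conj, ← Complex.exp_add, h0]
    congr 2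
    simp
    ring
  have hf : ∀ x, ∃ f : BoundedContinuousFunction ℝ ℂ, ∀ t, f t = vecFunc ξ η (Q.sigma t x) :=
    fun x => ⟨BoundedContinuousFunction.ofNormedAddCommGroup _ (afn_cont Q _ hn x)
      (‖vecFunc ξ η‖ * ‖x‖) (fun t => ((vecFunc ξ η).le_opNorm _).trans
        (by gcongr; exact afn_sigma_norm Q t x)), fun t => rfl⟩
  by_cases hab : b - a = 0
  · refine ⟨vecFunc ξ η, hn, fun x => ?_⟩
    obtain ⟨f, hf⟩ := hf x
    refine ⟨f, hf, ?_⟩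
    have : f = (vecFunc ξ η x) • (1 : BoundedContinuousFunction ℝ ℂ) := by
      ext t
      rw [hf, key, hab]
      simp
    rw [this, map_smul, hm1]
    simp
  · refine ⟨0, subset_closure (Submodule.zero_mem _), fun x => ?_⟩
    obtain ⟨f, hf⟩ := hf x
    refine ⟨f, hf, ?_⟩
    rw [afn_mean_char mR hminv f (b - a) hab (vecFunc ξ η x) fun t => by rw [hf, key]]
    simp

/-- span of the functionals of eigenvectors -/
def AfnE (Q : DiscreteQGroup H HH) : Submodule ℂ ((H →L[ℂ] H) →L[ℂ] ℂ) :=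
  Submodule.span ℂ {ω | ∃ ξ ∈ AfnEig Q, ∃ η ∈ AfnEig Q, ω = vecFunc ξ η}

lemma afn_add_left (ξ ξ' η : H) : vecFunc (ξ + ξ') η = vecFunc ξ η + vecFunc ξ' η := by
  ext x; simp [vecFunc, inner_add_right]

lemma afn_add_right (ξ η η' : H) : vecFunc ξ (η + η') = vecFunc ξ η + vecFunc ξ η' := by
  ext x; simp [vecFunc, inner_add_left]

lemma afn_smul_left (c : ℂ) (ξ η : H) : vecFunc (c • ξ) η = c • vecFunc ξ η := by
  ext x; simp [vecFunc, inner_smul_right]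

lemma afn_smul_right (c : ℂ) (ξ η : H) :
    vecFunc ξ (c • η) = (starRingEnd ℂ) c • vecFunc ξ η := by
  ext x; simp [vecFunc, inner_smul_left]

lemma afn_vec_cont : Continuous fun p : H × H => vecFunc p.1 p.2 := by
  unfold vecFunc
  exact ((innerSL ℂ).continuous.comp continuous_snd).clm_comp
    ((ContinuousLinearMap.apply ℂ H).continuous.comp continuous_fst)

lemma afn_normal_sub (Q : DiscreteQGroup H HH) (ω : (H →L[ℂ] H) →L[ℂ] ℂ) (hω : NormalFn ω) :
    ω ∈ closure (AfnE Q : Set ((H →L[ℂ] H) →L[ℂ] ℂ)) := by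
  have h1 : ∀ ξ ∈ Submodule.span ℂ (AfnEig Q), ∀ η ∈ Submodule.span ℂ (AfnEig Q),
      vecFunc ξ η ∈ AfnE Q := by
    intro ξ hξ η hη
    induction hξ, hη using Submodule.span_induction₂ with
    | mem_mem ξ η hξ hη => exact Submodule.subset_span ⟨ξ, hξ, η, hη, rfl⟩
    | zero_left η _ =>
      have : vecFunc (0 : H) η = 0 := by ext x; simp [vecFunc]
      rw [this]; exact (AfnE Q).zero_mem
    | zero_right ξ _ =>
      have : vecFunc ξ (0 : H) = 0 := by ext x; simp [vecFunc]
      rw [this]; exact (AfnE Q).zero_mem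
    | add_left a b c _ _ _ ha hb => rw [afn_add_left]; exact Submodule.add_mem _ ha hb
    | add_right a b c _ _ _ ha hb => rw [afn_add_right]; exact Submodule.add_mem _ ha hb
    | smul_left r a b _ _ h => rw [afn_smul_left]; exact Submodule.smul_mem _ _ h
    | smul_right r a b _ _ h => rw [afn_smul_right]; exact Submodule.smul_mem _ _ h
  have hd := (afn_eig_dense Q).prod (afn_eig_dense Q)
  have h2 : ∀ p : H × H, vecFunc p.1 p.2 ∈ (AfnE Q).topologicalClosure := by
    intro p
    exact map_mem_closure (f := fun p : H × H => vecFunc p.1 p.2) afn_vec_cont (hd p) fun q hq => h1 _ hq.1 _ hq.2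
  have h3 : Submodule.span ℂ (Set.range fun p : H × H => vecFunc p.1 p.2)
      ≤ (AfnE Q).topologicalClosure := by
    rw [Submodule.span_le]
    rintro _ ⟨p, rfl⟩
    exact h2 p
  exact closure_minimal h3 (AfnE Q).isClosed_topologicalClosure hω

lemma afn_E_avg (Q : DiscreteQGroup H HH) (mR : BoundedContinuousFunction ℝ ℂ →ₗ[ℂ] ℂ)
    (hm1 : mR 1 = 1)
    (hminv : ∀ (f g : BoundedContinuousFunction ℝ ℂ) (s : ℝ),
        (∀ t, g t = f (t + s)) → mR g = mR f)
    (ω : (H →L[ℂ] H) →L[ℂ] ℂ) (hω : ω ∈ AfnE Q) :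
    ∃ ω', NormalFn ω' ∧ AfnAvg Q mR ω ω' := by
  let N := (Submodule.span ℂ
    (Set.range fun p : H × H => vecFunc p.1 p.2)).topologicalClosure
  induction hω using Submodule.span_induction with
  | mem a ha =>
    obtain ⟨ξ, hξ, η, hη, rfl⟩ := ha
    exact afn_eig_avg Q mR hm1 hminv ξ η hξ hη
  | zero => exact ⟨0, N.zero_mem, fun x => ⟨0, by simp, by simp⟩⟩
  | add a b _ _ ha hb =>
    obtain ⟨a', h1, h2⟩ := ha
    obtain ⟨b', h3, h4⟩ := hb
    exact ⟨a' + b', N.add_mem h1 h3, afn_add Q mR h2 h4⟩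
  | smul c a _ ha =>
    obtain ⟨a', h1, h2⟩ := ha
    exact ⟨c • a', N.smul_mem c h1, afn_smul Q mR c h2⟩

/-- **Lemma 7.** Let `m_ℝ` be an invariant mean on `L^∞(ℝ)` (restricted here to the
bounded continuous functions, to which it is only ever applied). For a normal `ω ∈ M_*`
of a discrete quantum group, the averaged functional `ω'(x) = m_ℝ(t ↦ ω(σ^φ_t(x)))` is a
normal functional with `‖ω'‖ ≤ ‖ω‖`, and it is `σ^φ`-invariant. -/
theorem averaged_functional_normal (Q : DiscreteQGroup H HH)
    (mR : BoundedContinuousFunction ℝ ℂ →ₗ[ℂ] ℂ)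
    (hm1 : mR 1 = 1)
    (hmpos : ∀ f : BoundedContinuousFunction ℝ ℂ, (∀ t, 0 ≤ f t) → 0 ≤ mR f)
    (hminv : ∀ (f g : BoundedContinuousFunction ℝ ℂ) (s : ℝ),
        (∀ t, g t = f (t + s)) → mR g = mR f)
    (ω : (H →L[ℂ] H) →L[ℂ] ℂ) (hω : NormalFn ω) :
    ∃ ω' : (H →L[ℂ] H) →L[ℂ] ℂ, NormalFn ω' ∧ ‖ω'‖ ≤ ‖ω‖ ∧
      (∀ (x : H →L[ℂ] H) (f : BoundedContinuousFunction ℝ ℂ),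
        (∀ t, f t = ω (Q.sigma t x)) → ω' x = mR f) ∧
      ∀ (t : ℝ) (x : H →L[ℂ] H), ω' (Q.sigma t x) = ω' x := by
  obtain ⟨ω', h'⟩ := afn_exists Q mR hm1 hmpos ω hω
  refine ⟨ω', ?_, afn_norm Q mR hm1 hmpos h', ?_, ?_⟩
  · have hcl : ω' ∈ closure {χ : (H →L[ℂ] H) →L[ℂ] ℂ | NormalFn χ} := by
      rw [Metric.mem_closure_iff]
      intro ε hε
      obtain ⟨ω₀, h0, hd⟩ := Metric.mem_closure_iff.1 (afn_normal_sub Q ω hω) ε hε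
      obtain ⟨χ, hχ, hχ'⟩ := afn_E_avg Q mR hm1 hminv ω₀ h0
      refine ⟨χ, hχ, ?_⟩
      rw [dist_eq_norm] at hd ⊢
      exact (afn_norm Q mR hm1 hmpos (afn_sub Q mR h' hχ')).trans_lt hd
    have hset : IsClosed {χ : (H →L[ℂ] H) →L[ℂ] ℂ | NormalFn χ} := isClosed_closure
    rw [hset.closure_eq] at hcl
    exact hcl
  · intro x f hf
    obtain ⟨g, hg, hg'⟩ := h' x
    rw [hg']
    congr 1
    ext t
    rw [hf, hg]
  · intro s x
    obtain ⟨f, hf, hf'⟩ := h' x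
    obtain ⟨g, hg, hg'⟩ := h' (Q.sigma s x)
    rw [hf', hg']
    exact hminv f g s fun t => by rw [hg, hf, afn_sigma_sigma]
end
end

section
/- Let n, m ≥ 1 and let A be a complex (nm)×(nm) matrix, regarded as an n×n block matrix with blocks A_{kl} ∈ M_m(ℂ), 1 ≤ k,l ≤ n. Let |A| = (A*A)^{1/2} denote the positive square root of A*A, with blocks |A|_{kl} ∈ M_m(ℂ), and for B ∈ M_m(ℂ) write |B| = (B*B)^{1/2}. Then for all k,l: |Tr(|A|_{kl})| ≤ Σ_{p=1}^{n} Tr(|A_{pl}|). -/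
/-!
An interface for (von Neumann algebraic) locally compact quantum groups and
discrete quantum groups, following Kustermans–Vaes, encoded via the
multiplicative unitary `W` acting on (a model `HH` of) `H ⊗ H`.
-/

open scoped ComplexInnerProductSpace ComplexOrder ENNReal
open Filter Topology

noncomputable section

open scoped MatrixOrder

section BlockHelpers
open scoped Matrix.Norms.L2Operator Matrix

variable {ι : Type*} [Fintype ι] [DecidableEq ι]

lemma blk_pinv (P : Matrix ι ι ℂ) (hP : P.IsHermitian) :
    ∃ S : Matrix ι ι ℂ, Sᴴ = S ∧ S * P = P * S ∧ P * S * P = P := by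
  set U : Matrix ι ι ℂ := hP.eigenvectorUnitary.1 with hU
  have hUU : Uᴴ * U = 1 := Unitary.coe_star_mul_self hP.eigenvectorUnitary
  have hs : P = U * Matrix.diagonal (fun i => (hP.eigenvalues i : ℂ)) * Uᴴ := by
    have := hP.spectral_theorem
    rw [Unitary.conjStarAlgAut_apply] at this
    exact this
  set d : ι → ℂ := fun i => (hP.eigenvalues i : ℂ) with hd
  have hc : ∀ X Y : Matrix ι ι ℂ, (U * X * Uᴴ) * (U * Y * Uᴴ) = U * (X * Y) * Uᴴ := by
    intro X Y
    calc _ = U * X * (Uᴴ * U) * Y * Uᴴ := by simp only [Matrix.mul_assoc]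
      _ = _ := by rw [hUU]; simp only [Matrix.mul_assoc, Matrix.mul_one]
  refine ⟨U * Matrix.diagonal (fun i => (d i)⁻¹) * Uᴴ, ?_, ?_, ?_⟩
  · simp only [Matrix.conjTranspose_mul, Matrix.conjTranspose_conjTranspose,
      Matrix.diagonal_conjTranspose, Matrix.mul_assoc]
    congr 3
    ext i
    simp [hd]
  · rw [hs, hc, hc, Matrix.diagonal_mul_diagonal, Matrix.diagonal_mul_diagonal]
    simp only [mul_comm]
  · rw [hs, hc, hc, Matrix.diagonal_mul_diagonal, Matrix.diagonal_mul_diagonal]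
    congr 3
    ext i
    by_cases h : d i = 0 <;> simp [h]

lemma blk_polar (P A : Matrix ι ι ℂ) (hP : P.IsHermitian) (h : P * P = Aᴴ * A) :
    ∃ V : Matrix ι ι ℂ, ‖V‖ ≤ 1 ∧ V * A = P ∧ Vᴴ * P = A := by
  obtain ⟨S, hS, hc, hp⟩ := blk_pinv P hP
  have hPh : Pᴴ = P := hP
  refine ⟨S * Aᴴ, ?_, ?_, ?_⟩
  · have h1 : (S * Aᴴ) * (S * Aᴴ)ᴴ = P * S := by
      calc _ = S * (Aᴴ * A) * S := by simp [hS, Matrix.mul_assoc]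
        _ = (S * P) * P * S := by rw [← h]; simp only [Matrix.mul_assoc]
        _ = _ := by rw [hc, hp]
    have h2 : (P * S)ᴴ * (P * S) = P * S := by
      rw [Matrix.conjTranspose_mul, hS, hPh, hc, ← Matrix.mul_assoc, hp]
    have h3 := Matrix.l2_opNorm_conjTranspose_mul_self (P * S)
    rw [h2] at h3
    have h4 := Matrix.l2_opNorm_conjTranspose_mul_self (S * Aᴴ)ᴴ
    rw [Matrix.conjTranspose_conjTranspose, h1, Matrix.l2_opNorm_conjTranspose] at h4
    have h5 : ‖P * S‖ ≤ 1 := by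
      by_contra hcon
      push Not at hcon
      nlinarith
    nlinarith [norm_nonneg (S * Aᴴ)]
  · rw [Matrix.mul_assoc, ← h, ← Matrix.mul_assoc, hc, hp]
  · rw [Matrix.conjTranspose_mul, hS, Matrix.conjTranspose_conjTranspose, ← sub_eq_zero,
      ← Matrix.conjTranspose_mul_self_eq_zero]
    have e : A * S * P - A = A * (S * P - 1) := by simp [Matrix.mul_sub, Matrix.mul_assoc]
    rw [e, Matrix.conjTranspose_mul]
    have : P * (S * P - 1) = 0 := by simp [Matrix.mul_sub, ← Matrix.mul_assoc, hp]
    calc _ = (S * P - 1)ᴴ * (Aᴴ * A) * (S * P - 1) := by simp only [Matrix.mul_assoc]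
      _ = (S * P - 1)ᴴ * P * (P * (S * P - 1)) := by rw [← h]; simp only [Matrix.mul_assoc]
      _ = 0 := by rw [this, Matrix.mul_zero]

lemma blk_entry (C : Matrix ι ι ℂ) (i : ι) : ‖C i i‖ ≤ ‖C‖ := by
  have h := Matrix.l2_opNorm_mulVec C (EuclideanSpace.single i (1:ℂ))
  rw [EuclideanSpace.norm_single] at h
  have h2 := (PiLp.norm_apply_le _ i).trans h
  simpa using h2

lemma blk_trace (Q B X : Matrix ι ι ℂ) (hQ : Q.PosSemidef) (h : Q * Q = Bᴴ * B)
    (hX : ‖X‖ ≤ 1) : ‖(X * B).trace‖ ≤ Q.trace.re := by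
  obtain ⟨V, hV, -, hB⟩ := blk_polar Q B hQ.1 h
  have hH := hQ.1
  set U : Matrix ι ι ℂ := hH.eigenvectorUnitary.1 with hU
  have hUU : Uᴴ * U = 1 := Unitary.coe_star_mul_self hH.eigenvectorUnitary
  have hs : Q = U * Matrix.diagonal (fun i => (hH.eigenvalues i : ℂ)) * Uᴴ := by
    have := hH.spectral_theorem
    rw [Unitary.conjStarAlgAut_apply] at this
    exact this
  have hone : ‖(1 : Matrix ι ι ℂ)‖ ≤ 1 := by
    have := Matrix.l2_opNorm_conjTranspose_mul_self (1 : Matrix ι ι ℂ)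
    simp only [Matrix.conjTranspose_one, Matrix.mul_one] at this
    nlinarith [norm_nonneg (1 : Matrix ι ι ℂ)]
  have hUn : ‖U‖ ≤ 1 := by
    have := Matrix.l2_opNorm_conjTranspose_mul_self U
    rw [hUU] at this
    nlinarith [norm_nonneg U]
  have hC : ‖Uᴴ * (X * Vᴴ) * U‖ ≤ 1 := by
    refine (Matrix.l2_opNorm_mul _ _).trans (mul_le_one₀ ?_ (norm_nonneg _) hUn)
    refine (Matrix.l2_opNorm_mul _ _).trans (mul_le_one₀ ?_ (norm_nonneg _) ?_)
    · rwa [Matrix.l2_opNorm_conjTranspose]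
    refine (Matrix.l2_opNorm_mul _ _).trans (mul_le_one₀ hX (norm_nonneg _) ?_)
    rwa [Matrix.l2_opNorm_conjTranspose]
  have ht : (X * B).trace = ∑ i, (Uᴴ * (X * Vᴴ) * U) i i * (hH.eigenvalues i : ℂ) := by
    calc (X * B).trace
        = ((X * Vᴴ * U * Matrix.diagonal (fun i => (hH.eigenvalues i : ℂ))) * Uᴴ).trace := by
          conv_lhs => rw [← hB, hs]
          simp only [Matrix.mul_assoc]
      _ = (Uᴴ * (X * Vᴴ) * U * Matrix.diagonal (fun i => (hH.eigenvalues i : ℂ))).trace := by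
          rw [Matrix.trace_mul_comm]; simp only [Matrix.mul_assoc]
      _ = _ := by simp only [Matrix.trace, Matrix.diag_apply, Matrix.mul_diagonal]
  have hq : Q.trace.re = ∑ i, hH.eigenvalues i := by
    rw [hH.trace_eq_sum_eigenvalues]; simp
  rw [ht, hq]
  refine (norm_sum_le _ _).trans (Finset.sum_le_sum fun i _ => ?_)
  have h0 := hQ.eigenvalues_nonneg i
  rw [norm_mul, Complex.norm_real, Real.norm_of_nonneg h0]
  exact mul_le_of_le_one_left h0 ((blk_entry _ i).trans hC)

/-- the isometric embedding of the k-th block -/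
def blkE (n m : ℕ) (k : Fin n) : Matrix (Fin n × Fin m) (Fin m) ℂ :=
  Matrix.of fun a j => if a = (k, j) then 1 else 0

lemma blkE_mul (n m : ℕ) (A : Matrix (Fin n × Fin m) (Fin n × Fin m) ℂ) (k l : Fin n) :
    (blkE n m k)ᴴ * A * blkE n m l = Matrix.of fun i j => A (k, i) (l, j) := by
  ext i j
  simp [blkE, Matrix.mul_apply, apply_ite]

lemma blkE_norm (n m : ℕ) (k : Fin n) : ‖blkE n m k‖ ≤ 1 := by
  have h1 : (blkE n m k)ᴴ * blkE n m k = 1 := by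
    ext i j
    simp [blkE, Matrix.mul_apply, Matrix.one_apply, apply_ite, eq_comm]
  have := Matrix.l2_opNorm_conjTranspose_mul_self (blkE n m k)
  have hone : ‖(1 : Matrix (Fin m) (Fin m) ℂ)‖ ≤ 1 := by
    have := Matrix.l2_opNorm_conjTranspose_mul_self (1 : Matrix (Fin m) (Fin m) ℂ)
    simp only [Matrix.conjTranspose_one, Matrix.mul_one] at this
    nlinarith [norm_nonneg (1 : Matrix (Fin m) (Fin m) ℂ)]
  rw [h1] at this
  nlinarith [norm_nonneg (blkE n m k)]

lemma blk_main (n m : ℕ) (A P : Matrix (Fin n × Fin m) (Fin n × Fin m) ℂ) (k l : Fin n)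
    (hP : P.PosSemidef) (h : P * P = Aᴴ * A) (Q : Fin n → Matrix (Fin m) (Fin m) ℂ)
    (hQ : ∀ p, (Q p).PosSemidef)
    (hQQ : ∀ p, Q p * Q p = (Matrix.of fun i j : Fin m => A (p, i) (l, j))ᴴ *
      (Matrix.of fun i j : Fin m => A (p, i) (l, j))) :
    ‖(Matrix.trace (Matrix.of fun i j : Fin m => P (k, i) (l, j)))‖
      ≤ ∑ p : Fin n, (Q p).trace.re := by
  obtain ⟨V, hV, hVA, -⟩ := blk_polar P A hP.1 h
  have e : (Matrix.of fun i j : Fin m => P (k, i) (l, j)) =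
      ∑ p, ((blkE n m k)ᴴ * V * blkE n m p) * (Matrix.of fun i j : Fin m => A (p, i) (l, j)) := by
    ext i j
    rw [Matrix.sum_apply]
    simp only [blkE_mul]
    simp only [Matrix.of_apply, Matrix.mul_apply, ← hVA]
    rw [Fintype.sum_prod_type]
  rw [e, Matrix.trace_sum]
  refine (norm_sum_le _ _).trans (Finset.sum_le_sum fun p _ => ?_)
  refine blk_trace _ _ _ (hQ p) (hQQ p) ?_
  refine (Matrix.l2_opNorm_mul _ _).trans (mul_le_one₀ ?_ (norm_nonneg _) (blkE_norm n m p))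
  refine (Matrix.l2_opNorm_mul _ _).trans (mul_le_one₀ ?_ (norm_nonneg _) hV)
  rw [Matrix.l2_opNorm_conjTranspose]
  exact blkE_norm n m k

end BlockHelpers

/-- The tracial core of Lemma 3.11: for an `n × n` block matrix `A` with blocks
`A_{kl} ∈ M_m(ℂ)`, and `|A| = (A* A)^{1/2}` with blocks `|A|_{kl}`, one has
`|Tr(|A|_{kl})| ≤ ∑_p Tr(|A_{pl}|)`. -/
theorem trace_block_abs_le (n m : ℕ) (hn : 1 ≤ n) (hm : 1 ≤ m)
    (A : Matrix (Fin n × Fin m) (Fin n × Fin m) ℂ) (k l : Fin n) :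
    ‖(Matrix.trace (Matrix.of fun i j : Fin m =>
          CFC.sqrt (A.conjTranspose * A) (k, i) (l, j)))‖
      ≤ ∑ p : Fin n,
          ((CFC.sqrt ((Matrix.of fun i j : Fin m => A (p, i) (l, j)).conjTranspose *
              (Matrix.of fun i j : Fin m => A (p, i) (l, j)))).trace).re := by
  refine blk_main n m A _ k l (Matrix.nonneg_iff_posSemidef.mp (CFC.sqrt_nonneg _))
    (CFC.sqrt_mul_sqrt_self _ (star_mul_self_nonneg A)) _
    (fun p => Matrix.nonneg_iff_posSemidef.mp (CFC.sqrt_nonneg _))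
    (fun p => CFC.sqrt_mul_sqrt_self _ (star_mul_self_nonneg _))
end
end
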